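/- For any graph G on n vertices and any odd t ≥ 1, n^2 · (number of homomorphisms from P_{t+2} to G)^t ≥ (number of homomorphisms from P_t to G)^{t+2}, where P_j denotes the path with j edges. -/

import Mathlib

/-- The number of graph homomorphisms from `F` to `G`. -/
noncomputable def homCount {α β : Type*} (F : SimpleGraph α) (G : SimpleGraph β) : ℕ :=
  Nat.card (F →g G)

/-- The log-sum inequality. -/
theorem sum_mul_log_sub_log_le {ι : Type*} (s : Finset ι) (p b : ι → ℝ)
    (hp : ∀ i ∈ s, 0 ≤ p i) (hb : ∀ i ∈ s, 0 ≤ b i) (hpb : ∀ i ∈ s, 0 < p i → 0 < b i)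
    (hP : 0 < ∑ i ∈ s, p i) :
    0 < ∑ i ∈ s, b i ∧ ∑ i ∈ s, p i * (Real.log (b i) - Real.log (p i)) ≤
      (∑ i ∈ s, p i) * (Real.log (∑ i ∈ s, b i) - Real.log (∑ i ∈ s, p i)) := by
  have hB : 0 < ∑ i ∈ s, b i := by
    obtain ⟨i, hi, hpi⟩ := Finset.exists_lt_of_sum_lt (s := s) (f := fun _ => (0 : ℝ)) (g := p)
      (by simpa using hP)
    exact Finset.sum_pos' hb ⟨i, hi, hpb i hi hpi⟩
  refine ⟨hB, ?_⟩
  set P := ∑ i ∈ s, p i with hPdef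
  set B := ∑ i ∈ s, b i with hBdef
  have key : ∀ i ∈ s, p i * (Real.log (b i) - Real.log (p i)) ≤
      p i * (Real.log B - Real.log P) + (b i * (P / B) - p i) := by
    intro i hi
    rcases (hp i hi).eq_or_lt with h | h
    · rw [← h]
      have := mul_nonneg (hb i hi) (div_nonneg hP.le hB.le)
      simpa using this
    · have hbi := hpb i hi h
      have hlog := Real.log_le_sub_one_of_pos (show 0 < b i * P / (p i * B) by positivity)
      rw [Real.log_div (by positivity) (by positivity), Real.log_mul hbi.ne' hP.ne',
        Real.log_mul h.ne' hB.ne'] at hlog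
      have hmul := mul_le_mul_of_nonneg_left hlog h.le
      have heq : p i * (b i * P / (p i * B) - 1) = b i * (P / B) - p i := by
        field_simp
      rw [heq] at hmul
      linarith
  refine (Finset.sum_le_sum key).trans (le_of_eq ?_)
  rw [Finset.sum_add_distrib, Finset.sum_sub_distrib, ← Finset.sum_mul, ← Finset.sum_mul,
    ← hPdef, ← hBdef]
  field_simp
  ring

section WalkWeight

variable {V : Type*} [Fintype V]

/-- The total weight of the walks with `k` edges starting at a vertex, where `A u v` is the
weight of the step from `u` to `v`. -/
def walkWeight (A : V → V → ℝ) : ℕ → V → ℝ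
  | 0, _ => 1
  | k + 1, v => ∑ u, A v u * walkWeight A k u

variable {A : V → V → ℝ}

theorem walkWeight_nonneg (hA : ∀ u v, 0 ≤ A u v) (k : ℕ) (v : V) : 0 ≤ walkWeight A k v := by
  induction k generalizing v with
  | zero => exact zero_le_one
  | succ k ih => exact Finset.sum_nonneg fun u _ => mul_nonneg (hA v u) (ih u)

theorem walkWeight_succ_pos (hA : ∀ u v, 0 ≤ A u v) {k : ℕ} {u v : V} (h : 0 < A v u)
    (hu : 0 < walkWeight A k u) : 0 < walkWeight A (k + 1) v :=
  Finset.sum_pos' (fun w _ => mul_nonneg (hA v w) (walkWeight_nonneg hA k w))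
    ⟨u, Finset.mem_univ u, mul_pos h hu⟩

theorem sum_walkWeight_succ_mul (hS : ∀ u v, A u v = A v u) (k : ℕ) (f : V → ℝ) :
    ∑ v, walkWeight A (k + 1) v * f v = ∑ u, ∑ v, walkWeight A k u * A u v * f v := by
  rw [Finset.sum_comm]
  refine Finset.sum_congr rfl fun v _ => ?_
  rw [walkWeight, Finset.sum_mul]
  refine Finset.sum_congr rfl fun u _ => ?_
  rw [hS v u]
  ring

theorem sum_mul_walkWeight_succ (k : ℕ) (f : V → ℝ) :
    ∑ u, f u * walkWeight A (k + 1) u = ∑ u, ∑ v, f u * A u v * walkWeight A k v := by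
  refine Finset.sum_congr rfl fun u _ => ?_
  rw [walkWeight, Finset.mul_sum]
  exact Finset.sum_congr rfl fun v _ => by ring

theorem sum_walkWeight_mul_walkWeight (hS : ∀ u v, A u v = A v u) (i j : ℕ) :
    ∑ v, walkWeight A i v * walkWeight A j v = ∑ v, walkWeight A (i + j) v := by
  induction i generalizing j with
  | zero => simp [walkWeight]
  | succ i ih =>
    rw [sum_walkWeight_succ_mul hS, ← sum_mul_walkWeight_succ, ih, Nat.add_right_comm, add_assoc]

/-- The log-sum inequality comparing walks with `i + j + 1` edges, split at an edge, with the
walks obtained by traversing that edge three times. -/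
theorem walkWeight_backtrack_le (hA : ∀ u v, 0 ≤ A u v) (hS : ∀ u v, A u v = A v u) (i j : ℕ)
    (hN : 0 < ∑ v, walkWeight A (i + j + 1) v) :
    0 < ∑ v, walkWeight A (i + j + 3) v ∧
    (∑ v, walkWeight A (i + 1) v * walkWeight A j v *
        (Real.log (walkWeight A (i + 1) v) - Real.log (walkWeight A j v))) -
      (∑ v, walkWeight A i v * walkWeight A (j + 1) v *
        (Real.log (walkWeight A i v) - Real.log (walkWeight A (j + 1) v))) ≤
    (∑ v, walkWeight A (i + j + 1) v) *
      (Real.log (∑ v, walkWeight A (i + j + 3) v) -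
        Real.log (∑ v, walkWeight A (i + j + 1) v)) := by
  have a0 := walkWeight_nonneg hA
  have hP : ∑ e : V × V, walkWeight A i e.1 * A e.1 e.2 * walkWeight A j e.2 =
      ∑ v, walkWeight A (i + j + 1) v := by
    rw [Fintype.sum_prod_type, ← sum_walkWeight_succ_mul hS, sum_walkWeight_mul_walkWeight hS,
      Nat.add_right_comm]
  have hB : ∑ e : V × V, walkWeight A (j + 1) e.1 * A e.1 e.2 * walkWeight A (i + 1) e.2 =
      ∑ v, walkWeight A (i + j + 3) v := by
    rw [Fintype.sum_prod_type, ← sum_walkWeight_succ_mul hS, sum_walkWeight_mul_walkWeight hS]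
    congr! 2
    ring
  have hpos : ∀ e : V × V, 0 < walkWeight A i e.1 * A e.1 e.2 * walkWeight A j e.2 →
      0 < A e.1 e.2 ∧ 0 < walkWeight A i e.1 ∧ 0 < walkWeight A j e.2 ∧
      0 < walkWeight A (i + 1) e.2 ∧ 0 < walkWeight A (j + 1) e.1 := by
    intro e he
    have h1 : 0 < A e.1 e.2 := (hA _ _).lt_of_ne fun h => by simp [← h] at he
    have h2 : 0 < walkWeight A i e.1 := (a0 _ _).lt_of_ne fun h => by simp [← h] at he
    have h3 : 0 < walkWeight A j e.2 := (a0 _ _).lt_of_ne fun h => by simp [← h] at he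
    exact ⟨h1, h2, h3, walkWeight_succ_pos hA (hS _ _ ▸ h1) h2, walkWeight_succ_pos hA h1 h3⟩
  obtain ⟨hB0, hle⟩ := sum_mul_log_sub_log_le Finset.univ
    (fun e : V × V => walkWeight A i e.1 * A e.1 e.2 * walkWeight A j e.2)
    (fun e : V × V => walkWeight A (j + 1) e.1 * A e.1 e.2 * walkWeight A (i + 1) e.2)
    (fun e _ => mul_nonneg (mul_nonneg (a0 _ _) (hA _ _)) (a0 _ _))
    (fun e _ => mul_nonneg (mul_nonneg (a0 _ _) (hA _ _)) (a0 _ _))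
    (fun e _ he => by
      obtain ⟨h1, -, -, h4, h5⟩ := hpos e he
      positivity) (by rw [hP]; exact hN)
  rw [hP, hB] at hle
  rw [hB] at hB0
  refine ⟨hB0, le_trans (le_of_eq ?_) hle⟩
  have hw : ∑ v, walkWeight A (i + 1) v * walkWeight A j v *
        (Real.log (walkWeight A (i + 1) v) - Real.log (walkWeight A j v)) =
      ∑ e : V × V, walkWeight A i e.1 * A e.1 e.2 * walkWeight A j e.2 *
        (Real.log (walkWeight A (i + 1) e.2) - Real.log (walkWeight A j e.2)) := by
    simp only [mul_assoc (walkWeight A (i + 1) _)]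
    rw [sum_walkWeight_succ_mul hS, Fintype.sum_prod_type]
    simp only [mul_assoc]
  have hu : ∑ v, walkWeight A i v * walkWeight A (j + 1) v *
        (Real.log (walkWeight A i v) - Real.log (walkWeight A (j + 1) v)) =
      ∑ e : V × V, walkWeight A i e.1 * A e.1 e.2 * walkWeight A j e.2 *
        (Real.log (walkWeight A i e.1) - Real.log (walkWeight A (j + 1) e.1)) := by
    simp only [mul_right_comm _ (walkWeight A (j + 1) _)]
    rw [sum_mul_walkWeight_succ, Fintype.sum_prod_type]
    exact Finset.sum_congr rfl fun u _ => Finset.sum_congr rfl fun v _ => by ring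
  rw [hw, hu, ← Finset.sum_sub_distrib]
  refine Finset.sum_congr rfl fun e _ => ?_
  rcases (mul_nonneg (mul_nonneg (a0 i e.1) (hA e.1 e.2)) (a0 j e.2)).eq_or_lt with h | h
  · simp [← h]
  · obtain ⟨h1, h2, h3, h4, h5⟩ := hpos e h
    rw [Real.log_mul (by positivity) h4.ne', Real.log_mul h5.ne' h1.ne',
      Real.log_mul (by positivity) h3.ne', Real.log_mul h2.ne' h1.ne']
    ring

theorem sum_walkWeight_pow_le (hA : ∀ u v, 0 ≤ A u v) (hS : ∀ u v, A u v = A v u) (t : ℕ)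
    (ht : 1 ≤ t) :
    (∑ v, walkWeight A t v) ^ (t + 2) ≤
      (Fintype.card V : ℝ) ^ 2 * (∑ v, walkWeight A (t + 2) v) ^ t := by
  have a0 := walkWeight_nonneg hA
  rcases (Finset.sum_nonneg fun v _ => a0 t v).eq_or_lt with h | hN
  · rw [← h, zero_pow (by omega)]
    exact mul_nonneg (sq_nonneg _) (pow_nonneg (Finset.sum_nonneg fun v _ => a0 _ v) _)
  set N := ∑ v, walkWeight A t v with hNdef
  set W := ∑ v, walkWeight A (t + 2) v with hWdef
  let S : ℕ → ℝ := fun i => ∑ v, walkWeight A i v * walkWeight A (t - i) v *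
    (Real.log (walkWeight A i v) - Real.log (walkWeight A (t - i) v))
  have step : ∀ i < t, 0 < W ∧ S (i + 1) - S i ≤ N * (Real.log W - Real.log N) := by
    intro i hi
    obtain ⟨j, rfl⟩ : ∃ j, t = i + j + 1 := ⟨t - i - 1, by omega⟩
    have := walkWeight_backtrack_le hA hS i j hN
    have e1 : i + j + 1 - (i + 1) = j := by omega
    have e2 : i + j + 1 - i = j + 1 := by omega
    simpa only [S, e1, e2] using this
  have hW : 0 < W := (step 0 ht).1
  have tele : S t - S 0 ≤ t * (N * (Real.log W - Real.log N)) := by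
    rw [← Finset.sum_range_sub]
    refine (Finset.sum_le_sum fun i hi => (step i (Finset.mem_range.1 hi)).2).trans ?_
    simp
  obtain ⟨hn, hent⟩ := sum_mul_log_sub_log_le Finset.univ (walkWeight A t) (fun _ => 1)
    (fun v _ => a0 t v) (fun _ _ => zero_le_one) (fun _ _ _ => zero_lt_one) hN
  simp only [Finset.sum_const, Finset.card_univ, nsmul_eq_mul, mul_one] at hn hent
  have hends : S t - S 0 =
      -2 * ∑ v, walkWeight A t v * (Real.log 1 - Real.log (walkWeight A t v)) := by
    simp only [S, Nat.sub_self, Nat.sub_zero, walkWeight, Real.log_one, Finset.mul_sum,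
      ← Finset.sum_sub_distrib]
    exact Finset.sum_congr rfl fun v _ => by ring
  rw [hends] at tele
  rw [← hNdef] at hent
  have hlog : (t + 2) * Real.log N ≤ 2 * Real.log (Fintype.card V) + t * Real.log W :=
    le_of_mul_le_mul_left (by linarith) hN
  rw [← Real.log_le_log_iff (by positivity) (by positivity),
    Real.log_mul (by positivity) (by positivity), Real.log_pow, Real.log_pow, Real.log_pow]
  push_cast
  exact hlog

theorem sum_prod_cons_eq_walkWeight (A : V → V → ℝ) (k : ℕ) (v : V) :
    ∑ f : Fin k → V, ∏ i : Fin k,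
      A ((Fin.cons v f : Fin (k + 1) → V) i.castSucc) ((Fin.cons v f : Fin (k + 1) → V) i.succ) =
      walkWeight A k v := by
  induction k generalizing v with
  | zero => simp [walkWeight]
  | succ k ih =>
    rw [← (Fin.consEquiv fun _ => V).sum_comp, Fintype.sum_prod_type, walkWeight]
    refine Finset.sum_congr rfl fun u _ => ?_
    rw [← ih u, Finset.mul_sum]
    refine Finset.sum_congr rfl fun f _ => ?_
    rw [Fin.prod_univ_succ]
    simp [Fin.consEquiv]

end WalkWeight

/-- Homomorphisms from a path graph are sequences of consecutively adjacent vertices. -/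
def pathGraphHomEquiv {V : Type*} (G : SimpleGraph V) (k : ℕ) :
    (SimpleGraph.pathGraph (k + 1) →g G) ≃
      {f : Fin (k + 1) → V // ∀ i : Fin k, G.Adj (f i.castSucc) (f i.succ)} where
  toFun φ := ⟨φ, fun i => φ.map_rel (by simp [SimpleGraph.pathGraph_adj])⟩
  invFun f := ⟨f.1, by
    have key : ∀ a b : Fin (k + 1), a.val + 1 = b.val → G.Adj (f.1 a) (f.1 b) := by
      intro a b h
      have := f.2 ⟨a.val, by omega⟩
      rwa [show b = Fin.succ ⟨a.val, by omega⟩ from Fin.ext h.symm]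
    intro a b hab
    rcases SimpleGraph.pathGraph_adj.1 hab with h | h
    · exact key a b h
    · exact (key b a h).symm⟩
  left_inv _ := rfl
  right_inv _ := rfl

theorem homCount_pathGraph_eq_sum_walkWeight {V : Type*} [Fintype V] (G : SimpleGraph V)
    [DecidableRel G.Adj] (k : ℕ) :
    (homCount (SimpleGraph.pathGraph (k + 1)) G : ℝ) =
      ∑ v, walkWeight (fun u w => if G.Adj u w then 1 else 0) k v := by
  classical
  rw [homCount, Nat.card_congr (pathGraphHomEquiv G k), Nat.card_eq_fintype_card,
    Fintype.card_subtype, Finset.card_filter]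
  push_cast
  rw [← (Fin.consEquiv fun _ => V).sum_comp, Fintype.sum_prod_type]
  refine Finset.sum_congr rfl fun v _ => ?_
  rw [← sum_prod_cons_eq_walkWeight]
  refine Finset.sum_congr rfl fun f _ => ?_
  rw [Finset.prod_ite_zero]
  simp [Fin.consEquiv]

/-- For any graph `G` on `n` vertices and odd `t ≥ 1`,
`n^2 · |Hom(P_{t+2}; G)|^t ≥ |Hom(P_t; G)|^{t+2}`, where the path with `j`
edges is `SimpleGraph.pathGraph (j+1)`. -/
theorem es_step (n t : ℕ) (ht : Odd t) (ht1 : 1 ≤ t) (G : SimpleGraph (Fin n)) :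
    n ^ 2 * homCount (SimpleGraph.pathGraph (t + 3)) G ^ t ≥
      homCount (SimpleGraph.pathGraph (t + 1)) G ^ (t + 2) := by
  classical
  have h := sum_walkWeight_pow_le (A := fun u w => if G.Adj u w then 1 else 0)
    (fun u w => by split_ifs <;> norm_num) (fun u w => by simp only [G.adj_comm]) t ht1
  rw [← homCount_pathGraph_eq_sum_walkWeight, ← homCount_pathGraph_eq_sum_walkWeight,
    Fintype.card_fin] at h
  exact_mod_cast h
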